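/- Let A = diag(a_1, …, a_n) be a diagonal matrix with a_1 ≥ a_2 ≥ … ≥ a_n ≥ 0, let B = [b_{ij}] be an n×n Hermitian positive semidefinite matrix with Tr(AB) > 0, and let p be the smallest index j with a_j b_{jj} > 0. Suppose a_p = a_{p+1} = … = a_{p+l-1} > a_{p+l} (with the convention that this last inequality is vacuous if p + l − 1 = n), and let C = [b_{ij}]_{i,j=p}^{p+l-1} be the corresponding l×l principal submatrix of B. Then for every fixed positive integer k, the limit as m → ∞ of Tr(S_{m,k}(A,B)) / (a_p^m · binomial(m+k, k)) equals Tr(C^k). -/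

import Mathlib

/-!
The proof works entrywise, using the recursion `S (m+1) (k+1) = A * S m (k+1) + B * S (m+1) k`
obtained by splitting off the first letter of each word.

For an index `j` before `p` we have `a j ≥ a p > 0`, so minimality of `p` forces `b_jj = 0` and,
`B` being positive semidefinite, the whole `j`-th row and column of `B` vanish. Hence these indices
contribute nothing to the trace as soon as a word contains a letter `B`. For `i, j ≥ p`, dividing
the `(i, j)` entry of the recursion by `(a p)^(m+1)` gives a scalar recursion
`x (m+1) = d * x m + y (m+1)` with `d = a i / a p ∈ [0, 1]`. By `tendsto_of_recursion`, if
`y m / (m+k choose k)` tends to `Y`, then `x m / (m+k+1 choose k+1)` tends to `Y` when `d = 1`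
(a Cesàro argument) and to `0` when `d < 1` (there `x m = O(m^k)`).

By induction on `k`, `S m k / (a p ^ m * (m+k choose k))` tends, in the entries with indices `≥ p`,
to `(P B)^k P`, where `P` is the diagonal projection onto the block `p, …, p+l-1`. Writing
`P = E Eᵀ` with `Eᵀ E = 1` and `C = Eᵀ B E`, the trace of that limit is the trace of `C ^ k`.
-/

open Polynomial Matrix ComplexOrder Filter

/-- `S p q A B` is the sum of all `(p+q).choose p` words in `A, B` with `p` letters `A` and
`q` letters `B`; equivalently, the coefficient of `t^q` in `(A + t B)^(p+q)`. -/
noncomputable def S {n : ℕ} (p q : ℕ) (A B : Matrix (Fin n) (Fin n) ℂ) :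
    Matrix (Fin n) (Fin n) ℂ :=
  ((Polynomial.C A + Polynomial.X * Polynomial.C B) ^ (p + q)).coeff q

/-! ### The words `S m k` -/

lemma S_coeff_eq_zero {n : ℕ} (A B : Matrix (Fin n) (Fin n) ℂ) (r q : ℕ) (h : r < q) :
    ((Polynomial.C A + Polynomial.X * Polynomial.C B) ^ r).coeff q = 0 := by
  induction r generalizing q with
  | zero => rw [pow_zero, Polynomial.coeff_one, if_neg (by omega)]
  | succ r ih =>
    obtain ⟨q, rfl⟩ : ∃ q', q = q' + 1 := ⟨q - 1, by omega⟩
    rw [pow_succ', add_mul, mul_assoc, Polynomial.coeff_add, Polynomial.coeff_C_mul,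
      Polynomial.coeff_X_mul, Polynomial.coeff_C_mul, ih _ (by omega), ih _ (by omega)]
    simp

lemma S_succ_succ {n : ℕ} (A B : Matrix (Fin n) (Fin n) ℂ) (m k : ℕ) :
    S (m + 1) (k + 1) A B = A * S m (k + 1) A B + B * S (m + 1) k A B := by
  unfold S
  rw [show m + 1 + (k + 1) = (m + (k + 1)) + 1 by ring, pow_succ', add_mul, mul_assoc,
    Polynomial.coeff_add, Polynomial.coeff_C_mul, Polynomial.coeff_X_mul, Polynomial.coeff_C_mul,
    show m + 1 + k = m + (k + 1) by ring]

lemma S_zero_succ {n : ℕ} (A B : Matrix (Fin n) (Fin n) ℂ) (k : ℕ) :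
    S 0 (k + 1) A B = B * S 0 k A B := by
  unfold S
  rw [show 0 + (k + 1) = (0 + k) + 1 by ring, pow_succ', add_mul, mul_assoc,
    Polynomial.coeff_add, Polynomial.coeff_C_mul, Polynomial.coeff_X_mul, Polynomial.coeff_C_mul,
    S_coeff_eq_zero A B _ _ (by omega), mul_zero, zero_add]

lemma S_zero_right {n : ℕ} (A B : Matrix (Fin n) (Fin n) ℂ) (m : ℕ) :
    S m 0 A B = A ^ m := by
  unfold S
  induction m with
  | zero => simp
  | succ m ih =>
    rw [add_zero] at ih ⊢
    rw [pow_succ', add_mul, mul_assoc, Polynomial.coeff_add, Polynomial.coeff_C_mul,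
      Polynomial.coeff_X_mul_zero, ih, add_zero, pow_succ']

/-! ### The scalar recursion -/

lemma tendsto_choose_ratio (k : ℕ) :
    Tendsto (fun m : ℕ => ((m + k).choose k : ℝ) / ((m + (k + 1)).choose (k + 1) : ℝ))
      atTop (nhds 0) := by
  have h : ∀ m : ℕ, ((m + k).choose k : ℝ) / ((m + (k + 1)).choose (k + 1) : ℝ)
      = ((k + 1 : ℕ) : ℝ) / ((m + (k + 1) : ℕ) : ℝ) := by
    intro m
    have h1 : 0 < (m + (k + 1)).choose (k + 1) := Nat.choose_pos (by omega)
    have h2 := Nat.add_one_mul_choose_eq (m + k) k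
    rw [div_eq_div_iff (by positivity) (by positivity)]
    have h3 : (((m + k + 1) * (m + k).choose k : ℕ) : ℝ)
        = (((m + k + 1).choose (k + 1) * (k + 1) : ℕ) : ℝ) := by rw [h2]
    rw [show m + (k + 1) = m + k + 1 by ring]
    push_cast at h3 ⊢
    linarith
  simp_rw [h]
  exact (tendsto_natCast_atTop_atTop.comp (tendsto_add_atTop_nat (k + 1))).const_div_atTop _

/-- The case `d < 1` of `tendsto_of_recursion`: `x m` is then of the order of `(m+k choose k)`
only, since the binomials `(m+k choose k)` increase with `m`. -/
lemma tendsto_of_recursion_lt (k : ℕ) (d : ℝ) (hd0 : 0 ≤ d) (hd1 : d < 1) (x y : ℕ → ℂ) (Y : ℂ)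
    (hx : ∀ m, x (m + 1) = d * x m + y (m + 1))
    (hy : Tendsto (fun m : ℕ => y m / ((m + k).choose k : ℂ)) atTop (nhds Y)) :
    Tendsto (fun m : ℕ => x m / ((m + (k + 1)).choose (k + 1) : ℂ)) atTop (nhds 0) := by
  obtain ⟨M, hM⟩ := hy.norm.bddAbove_range
  have hyM : ∀ m, ‖y m‖ ≤ M * ((m + k).choose k : ℝ) := by
    intro m
    have h1 : 0 < (m + k).choose k := Nat.choose_pos (by omega)
    have h2 : ‖y m / ((m + k).choose k : ℂ)‖ ≤ M := hM ⟨m, rfl⟩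
    rw [norm_div, Complex.norm_natCast, div_le_iff₀ (by positivity)] at h2
    exact h2
  have h1d : 0 < 1 - d := by linarith
  -- `K` is chosen so that `d * K + M ≤ K`, which makes the bound below inductive.
  set K : ℝ := max ‖x 0‖ (M / (1 - d))
  have hK0 : 0 ≤ K := (norm_nonneg _).trans (le_max_left _ _)
  have hKM : d * K + M ≤ K := by
    have : M / (1 - d) ≤ K := le_max_right _ _
    rw [div_le_iff₀ h1d] at this
    linarith
  have hxK : ∀ m, ‖x m‖ ≤ K * ((m + k).choose k : ℝ) := by
    intro m
    induction m with
    | zero =>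
      rw [zero_add, Nat.choose_self, Nat.cast_one, mul_one]
      exact le_max_left _ _
    | succ m ih =>
      have hmono : ((m + k).choose k : ℝ) ≤ ((m + 1 + k).choose k : ℝ) := by
        exact_mod_cast Nat.choose_le_choose k (by omega)
      calc ‖x (m + 1)‖ ≤ d * ‖x m‖ + ‖y (m + 1)‖ := by
            rw [hx]
            refine (norm_add_le _ _).trans (le_of_eq ?_)
            rw [norm_mul, Complex.norm_of_nonneg hd0]
        _ ≤ d * (K * ((m + 1 + k).choose k : ℝ)) + M * ((m + 1 + k).choose k : ℝ) := by
            gcongr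
            · exact ih.trans (by gcongr)
            · exact hyM _
        _ = (d * K + M) * ((m + 1 + k).choose k : ℝ) := by ring
        _ ≤ _ := by gcongr
  have hlim := (tendsto_choose_ratio k).const_mul K
  rw [mul_zero] at hlim
  refine squeeze_zero_norm (fun m => ?_) hlim
  rw [norm_div, Complex.norm_natCast, ← mul_div_assoc]
  gcongr
  exact hxK m

/-- The case `d = 1` of `tendsto_of_recursion`: a Cesàro mean with weights `(i+k choose k)`. -/
lemma tendsto_of_recursion_one (k : ℕ) (x y : ℕ → ℂ) (Y : ℂ) (h0 : x 0 = y 0)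
    (hx : ∀ m, x (m + 1) = x m + y (m + 1))
    (hy : Tendsto (fun m : ℕ => y m / ((m + k).choose k : ℂ)) atTop (nhds Y)) :
    Tendsto (fun m : ℕ => x m / ((m + (k + 1)).choose (k + 1) : ℂ)) atTop (nhds Y) := by
  have hsum : ∀ m, x m = ∑ i ∈ Finset.range (m + 1), y i := by
    intro m
    induction m with
    | zero => simpa using h0
    | succ m ih => rw [hx, ih, ← Finset.sum_range_succ]
  have hpos : ∀ m j : ℕ, 0 < (m + j).choose j := fun m j => Nat.choose_pos (by omega)
  have hne : ∀ m j : ℕ, ((m + j).choose j : ℂ) ≠ 0 := fun m j => by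
    exact_mod_cast (hpos m j).ne'
  have hg : (fun m : ℕ => y m - Y * ((m + k).choose k : ℂ))
      =o[atTop] (fun m : ℕ => ((m + k).choose k : ℝ)) := by
    have hg' : (fun m : ℕ => y m - Y * ((m + k).choose k : ℂ))
        =o[atTop] (fun m : ℕ => ((m + k).choose k : ℂ)) := by
      rw [Asymptotics.isLittleO_iff_tendsto fun m h => absurd h (hne m k)]
      have := hy.sub_const Y
      rw [sub_self] at this
      refine this.congr fun m => ?_
      rw [sub_div, mul_div_cancel_right₀ _ (hne m k)]
    simpa using hg'.norm_right
  have hdiv : Tendsto (fun m => ∑ i ∈ Finset.range m, ((i + k).choose k : ℝ)) atTop atTop := by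
    refine tendsto_atTop_mono (fun m => ?_) tendsto_natCast_atTop_atTop
    calc (m : ℝ) = ∑ i ∈ Finset.range m, (1 : ℝ) := by simp
      _ ≤ _ := Finset.sum_le_sum fun i _ => by exact_mod_cast hpos i k
  have hs := ((hg.sum_range (fun m => by positivity) hdiv).comp_tendsto
    (tendsto_add_atTop_nat 1)).norm_right
  have hbinom : ∀ m, ∑ i ∈ Finset.range (m + 1), ((i + k).choose k : ℝ)
      = ((m + (k + 1)).choose (k + 1) : ℝ) := fun m => by
    exact_mod_cast Nat.sum_range_add_choose m k
  have hbinomC : ∀ m, ∑ i ∈ Finset.range (m + 1), ((i + k).choose k : ℂ)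
      = ((m + (k + 1)).choose (k + 1) : ℂ) := fun m => by
    exact_mod_cast Nat.sum_range_add_choose m k
  have hs' : (fun m : ℕ => x m - Y * ((m + (k + 1)).choose (k + 1) : ℂ))
      =o[atTop] (fun m : ℕ => ((m + (k + 1)).choose (k + 1) : ℂ)) := by
    refine Asymptotics.IsLittleO.of_norm_right ?_
    refine hs.congr (fun m => ?_) (fun m => ?_)
    · simp only [Function.comp_apply, Finset.sum_sub_distrib, ← Finset.mul_sum, hbinomC, hsum]
    · simp only [Function.comp_apply, hbinom, Real.norm_natCast, Complex.norm_natCast]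
  have hlim := hs'.tendsto_div_nhds_zero.add_const Y
  rw [zero_add] at hlim
  refine hlim.congr fun m => ?_
  rw [sub_div, mul_div_cancel_right₀ _ (hne m (k + 1)), sub_add_cancel]

/-- Passing from `y` to a solution `x` of `x (m+1) = d * x m + y (m+1)` raises the order of growth
by one if `d = 1`, and does not raise it if `0 ≤ d < 1`. -/
lemma tendsto_of_recursion (k : ℕ) (d : ℝ) (hd0 : 0 ≤ d) (hd1 : d ≤ 1) (x y : ℕ → ℂ) (Y : ℂ)
    (h0 : x 0 = y 0) (hx : ∀ m, x (m + 1) = d * x m + y (m + 1))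
    (hy : Tendsto (fun m : ℕ => y m / ((m + k).choose k : ℂ)) atTop (nhds Y)) :
    Tendsto (fun m : ℕ => x m / ((m + (k + 1)).choose (k + 1) : ℂ)) atTop
      (nhds ((if d = 1 then 1 else 0) * Y)) := by
  split_ifs with h
  · subst h
    rw [one_mul]
    exact tendsto_of_recursion_one k x y Y h0 (fun m => by simpa using hx m) hy
  · rw [zero_mul]
    exact tendsto_of_recursion_lt k d hd0 (lt_of_le_of_ne hd1 h) x y Y hx hy

/-! ### The limit matrix and its trace -/

/-- With `P = E Eᵀ`, where the columns of `E` are the unit vectors `e i`, this compares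
`(P B)^k P` with the powers of `Eᵀ B E`. -/
lemma trace_block {n l : ℕ} (e : Fin l → Fin n) (he : Function.Injective e)
    (P B : Matrix (Fin n) (Fin n) ℂ)
    (hP : P = Matrix.diagonal fun i => if ∃ j, e j = i then 1 else 0) (k : ℕ) :
    ((P * B) ^ k * P).trace = ((B.submatrix e e) ^ k).trace := by
  set E : Matrix (Fin n) (Fin l) ℂ := (1 : Matrix (Fin n) (Fin n) ℂ).submatrix id e with hE
  have hEE : Eᵀ * E = 1 := by
    ext i j
    simp [hE, Matrix.mul_apply, Matrix.one_apply, he.eq_iff]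
  have hPE : P = E * Eᵀ := by
    ext i j
    simp only [hP, hE, Matrix.mul_apply, Matrix.transpose_apply, Matrix.submatrix_apply, id,
      Matrix.one_apply, Matrix.diagonal_apply]
    by_cases h : ∃ r, e r = i
    · obtain ⟨r, rfl⟩ := h
      rw [Finset.sum_eq_single r (fun t _ ht => by rw [if_neg (he.ne ht.symm), zero_mul])
        (fun h => absurd (Finset.mem_univ r) h)]
      simp [eq_comm]
    · have h' : ∀ r, i ≠ e r := fun r hr => h ⟨r, hr.symm⟩
      simp [h, h']
  have hC : B.submatrix e e = Eᵀ * B * E := by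
    ext i j
    simp [hE, Matrix.mul_apply, Matrix.one_apply]
  have hpow : (P * B) ^ k * E = E * (B.submatrix e e) ^ k := by
    induction k with
    | zero => simp
    | succ k ih =>
      rw [pow_succ', Matrix.mul_assoc, ih, pow_succ', hPE, hC]
      simp only [Matrix.mul_assoc]
  calc ((P * B) ^ k * P).trace = ((P * B) ^ k * E * Eᵀ).trace := by
        rw [Matrix.mul_assoc, ← hPE]
    _ = ((B.submatrix e e) ^ k).trace := by
        rw [hpow, Matrix.mul_assoc, Matrix.trace_mul_comm, Matrix.mul_assoc, hEE, Matrix.mul_one]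

lemma posSemidef_row_zero {n : ℕ} {B : Matrix (Fin n) (Fin n) ℂ} (hB : B.PosSemidef)
    {i : Fin n} (hi : B i i = 0) (j : Fin n) : B i j = 0 := by
  have h : B *ᵥ Pi.single i 1 = 0 := by
    rw [← hB.dotProduct_mulVec_zero_iff]
    simp [hi]
  have hji : B j i = 0 := by simpa using congrFun h j
  rw [← hB.isHermitian.apply, hji, star_zero]

/-- Let `A = diag(a)` with `a₁ ≥ … ≥ aₙ ≥ 0`, `B` Hermitian positive semidefinite with
`Tr(AB) > 0`, `p` the smallest index with `a_p b_pp > 0`, and suppose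
`a_p = … = a_{p+l-1} > a_{p+l}` (the last inequality being vacuous if `p+l-1` is the last
index). Let `C` be the principal `l×l` submatrix of `B` on rows/columns `p, …, p+l-1`.
Then `Tr(S_{m,k}(A,B)) / (a_p^m (m+k choose k)) → Tr(C^k)` as `m → ∞`. -/
theorem stmt_3 {n : ℕ} (a : Fin n → ℝ) (ha : ∀ i j : Fin n, i ≤ j → a j ≤ a i)
    (ha0 : ∀ i, 0 ≤ a i)
    (A : Matrix (Fin n) (Fin n) ℂ) (hA : A = Matrix.diagonal fun i => (a i : ℂ))
    (B : Matrix (Fin n) (Fin n) ℂ) (hB : B.PosSemidef)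
    (hAB : 0 < (A * B).trace)
    (p : Fin n) (hp : 0 < a p * (B p p).re)
    (hpmin : ∀ j : Fin n, j < p → ¬ (0 < a j * (B j j).re))
    (l : ℕ) (hl : 1 ≤ l) (hpl : (p : ℕ) + l ≤ n)
    (heq : ∀ i : Fin n, (p : ℕ) ≤ (i : ℕ) → (i : ℕ) < (p : ℕ) + l → a i = a p)
    (hlt : ∀ h : (p : ℕ) + l < n, a ⟨(p : ℕ) + l, h⟩ < a p)
    (C : Matrix (Fin l) (Fin l) ℂ)
    (hC : C = B.submatrix (fun i : Fin l => (⟨(p : ℕ) + (i : ℕ), by omega⟩ : Fin n))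
      (fun j : Fin l => (⟨(p : ℕ) + (j : ℕ), by omega⟩ : Fin n)))
    (k : ℕ) (hk : 1 ≤ k) :
    Tendsto (fun m : ℕ => (S m k A B).trace / ((a p : ℂ) ^ m * ((m + k).choose k)))
      atTop (nhds (C ^ k).trace) := by
  have hap : 0 < a p := by
    rcases (ha0 p).lt_or_eq with h | h
    · exact h
    · rw [← h, zero_mul] at hp
      exact absurd hp (lt_irrefl _)
  have hapC : (a p : ℂ) ≠ 0 := by exact_mod_cast hap.ne'
  have hrow : ∀ i : Fin n, i < p → ∀ j, B i j = 0 := by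
    intro i hi
    have hai : 0 < a i := hap.trans_le (ha i p hi.le)
    have hdiag : 0 ≤ B i i := hB.diag_nonneg
    rw [Complex.nonneg_iff] at hdiag
    have hre : (B i i).re = 0 := by
      refine le_antisymm ?_ hdiag.1
      by_contra hcon
      exact hpmin i hi (mul_pos hai (not_le.mp hcon))
    exact posSemidef_row_zero hB (Complex.ext hre hdiag.2.symm)
  have hcol : ∀ i : Fin n, i < p → ∀ j, B j i = 0 := by
    intro i hi j
    rw [← hB.isHermitian.apply, hrow i hi j, star_zero]
  set e : Fin l → Fin n := fun i => ⟨(p : ℕ) + (i : ℕ), by omega⟩ with he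
  have heinj : Function.Injective e := by
    intro i j hij
    simp only [he, Fin.mk.injEq] at hij
    exact Fin.ext (by omega)
  -- Among the indices `≥ p`, the block is exactly where the ratio `a i / a p` is `1`.
  have hblock : ∀ i : Fin n, p ≤ i → ((∃ j, e j = i) ↔ a i / a p = 1) := by
    intro i hi
    rw [div_eq_one_iff_eq hap.ne']
    constructor
    · rintro ⟨j, rfl⟩
      exact heq _ hi (by simp [he])
    · intro hai
      have hil : (i : ℕ) < p + l := by
        by_contra hcon
        have hn : (p : ℕ) + l < n := by omega
        have := ha ⟨(p : ℕ) + l, hn⟩ i (Fin.le_def.mpr (by simpa using hcon))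
        linarith [hlt hn]
      have hi' : (p : ℕ) ≤ i := hi
      exact ⟨⟨i - p, by omega⟩, Fin.ext (by simp [he]; omega)⟩
  set P : Matrix (Fin n) (Fin n) ℂ :=
    Matrix.diagonal fun i => if ∃ j, e j = i then 1 else 0 with hP
  rw [hC, ← trace_block e heinj P B hP k]
  have hmain : ∀ k : ℕ, ∀ i j : Fin n, p ≤ i → p ≤ j →
      Tendsto (fun m : ℕ => (S m k A B i j / (a p : ℂ) ^ m) / ((m + k).choose k : ℂ)) atTop
        (nhds (((P * B) ^ k * P) i j)) := by
    intro k
    induction k with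
    | zero =>
      intro i j hi hj
      simp only [S_zero_right, hA, Matrix.diagonal_pow, pow_zero, one_mul, hP, Nat.choose_zero_right, Nat.cast_one, div_one]
      rcases eq_or_ne i j with rfl | hij
      · simp only [Matrix.diagonal_apply_eq, Pi.pow_apply, ← div_pow]
        have hb := hblock i hi
        have hle : a i / a p ≤ 1 := (div_le_one hap).mpr (ha p i hi)
        by_cases h : a i / a p = 1
        · rw [if_pos (hb.mpr h)]
          have h' : (a i : ℂ) / a p = 1 := by exact_mod_cast h
          simp [h']
        · rw [if_neg (fun h' => h (hb.mp h'))]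
          apply tendsto_pow_atTop_nhds_zero_of_norm_lt_one
          rw [← Complex.ofReal_div, Complex.norm_of_nonneg (div_nonneg (ha0 i) hap.le)]
          exact lt_of_le_of_ne hle h
      · simp [Matrix.diagonal_apply_ne _ hij]
    | succ k ih =>
      intro i j hi hj
      have hy : Tendsto (fun m : ℕ => ((B * S m k A B) i j / (a p : ℂ) ^ m)
          / ((m + k).choose k : ℂ)) atTop (nhds ((B * ((P * B) ^ k * P)) i j)) := by
        have hBM : ∀ M : Matrix (Fin n) (Fin n) ℂ, (B * M) i j = ∑ z, B i z * M z j :=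
          fun M => Matrix.mul_apply
        simp only [hBM, Finset.sum_div]
        refine tendsto_finsetSum _ fun z _ => ?_
        by_cases hz : p ≤ z
        · simpa only [mul_div_assoc] using (ih z j hz hj).const_mul (B i z)
        · simp [hcol z (not_le.mp hz) i]
      have := tendsto_of_recursion k (a i / a p) (div_nonneg (ha0 i) hap.le)
        ((div_le_one hap).mpr (ha p i hi)) (fun m => S m (k + 1) A B i j / (a p : ℂ) ^ m)
        (fun m => (B * S m k A B) i j / (a p : ℂ) ^ m) _ (by simp [S_zero_succ])
        (fun m => by
          simp only [S_succ_succ, hA, Matrix.add_apply, Matrix.diagonal_mul, Complex.ofReal_div]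
          field_simp
          ring) hy
      convert this using 2
      rw [pow_succ', Matrix.mul_assoc, Matrix.mul_assoc, hP, Matrix.diagonal_mul]
      simp only [hblock i hi]
  have hzero : ∀ i : Fin n, i < p → ∀ k m : ℕ, S m (k + 1) A B i i = 0 := by
    intro i hi k m
    have hBM : ∀ M : Matrix (Fin n) (Fin n) ℂ, (B * M) i i = 0 := fun M => by
      simp [Matrix.mul_apply, hrow i hi]
    induction m with
    | zero => rw [S_zero_succ, hBM]
    | succ m ih => rw [S_succ_succ, Matrix.add_apply, hBM, hA, Matrix.diagonal_mul, ← hA, ih]; simp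
  obtain ⟨k, rfl⟩ : ∃ k', k = k' + 1 := ⟨k - 1, by omega⟩
  simp only [Matrix.trace, Finset.sum_div, Matrix.diag_apply]
  refine tendsto_finsetSum _ fun i _ => ?_
  by_cases hi : p ≤ i
  · simpa only [div_div] using hmain (k + 1) i i hi hi
  · have hi' := not_le.mp hi
    have hnb : ¬ ∃ j, e j = i := by
      rintro ⟨j, rfl⟩
      exact hi (Fin.le_def.mpr (by simp [he]))
    have hlim : ((P * B) ^ (k + 1) * P) i i = 0 := by
      rw [hP, Matrix.mul_diagonal, if_neg hnb, mul_zero]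
    simp [hzero i hi', hlim]
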